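/- Extended SURE (eSURE) is unbiased: let x ∈ ℝ^N be deterministic, y₁ = x + n₁ with n₁ ~ N(0, σ₁²I), z ~ N(0, σ_z²I) independent of n₁, and y₂ = y₁ + z. Then for h: ℝ^N → ℝ^N C¹ with bounded derivative, E[(1/N)‖x - h(y₂)‖²] = E[(1/N)‖y₁ - h(y₂)‖² - σ₁² + (2σ₁²/N)·∑ᵢ ∂hᵢ(y₂)/∂(y₂)ᵢ], where expectations are over (n₁, z). -/

import Mathlib

/-!
Expanding the square with `y₁ = x + n₁` gives, coordinate by coordinate,
`((x + n₁)ᵢ - hᵢ(y₂))² = (xᵢ - hᵢ(y₂))² + n₁ᵢ² + 2 xᵢ n₁ᵢ - 2 n₁ᵢ hᵢ(y₂)`.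
The expectations of `n₁ᵢ²` and `n₁ᵢ` are `σ₁²` and `0`, and Stein's identity evaluates the last
term: `E[n₁ᵢ hᵢ(y₂)] = σ₁² E[∂ᵢhᵢ(y₂)]`.

Stein's identity is integration by parts against the one-dimensional Gaussian density
(`stein_real`), applied in the `i`-th coordinate of `n₁` with all other coordinates and `z` frozen
(`stein_pi`, `stein_prod`). A bounded derivative makes `h` grow at most linearly, hence
`h(y₂)` is square-integrable (`memLp_two_of_fderiv_le`), which gives all the integrability needed.
-/

open MeasureTheory ProbabilityTheory
open scoped NNReal

lemma integrable_gaussianReal_iff {v : ℝ≥0} (hv : v ≠ 0) (g : ℝ → ℝ) :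
    Integrable g (gaussianReal 0 v) ↔ Integrable (fun t => gaussianPDFReal 0 v t * g t) := by
  rw [gaussianReal_of_var_ne_zero _ hv,
    integrable_withDensity_iff_integrable_smul' (measurable_gaussianPDF 0 v)
      (Filter.Eventually.of_forall fun _ => gaussianPDF_lt_top)]
  simp [toReal_gaussianPDF]

lemma hasDerivAt_gaussianPDFReal {v : ℝ≥0} (hv : v ≠ 0) (t : ℝ) :
    HasDerivAt (gaussianPDFReal 0 v) (-(t / v) * gaussianPDFReal 0 v t) t := by
  have hv' : (v : ℝ) ≠ 0 := by exact_mod_cast hv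
  rw [gaussianPDFReal_def]
  have h1 : HasDerivAt (fun s : ℝ => -(s - 0) ^ 2 / (2 * (v : ℝ))) (-(t / v)) t := by
    refine ((((hasDerivAt_id t).sub_const 0).pow 2).neg.div_const (2 * (v : ℝ))).congr_deriv ?_
    simp
    field_simp
  refine (h1.exp.const_mul ((√(2 * Real.pi * v))⁻¹)).congr_deriv ?_
  ring

/-- **Stein's identity** for a centred Gaussian on `ℝ`: integration by parts against the density
`φ`, whose derivative at `t` is `-(t / v) φ(t)`. -/
lemma stein_real {v : ℝ≥0} (hv : v ≠ 0) {g g' : ℝ → ℝ} (hg : ∀ t, HasDerivAt g (g' t) t)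
    (h1 : Integrable (fun t => t * g t) (gaussianReal 0 v))
    (h2 : Integrable g' (gaussianReal 0 v)) (h3 : Integrable g (gaussianReal 0 v)) :
    ∫ t, t * g t ∂gaussianReal 0 v = v * ∫ t, g' t ∂gaussianReal 0 v := by
  have hv' : (v : ℝ) ≠ 0 := by exact_mod_cast hv
  rw [integrable_gaussianReal_iff hv] at h1 h2 h3
  have key := integral_mul_deriv_eq_deriv_mul_of_integrable
    (u := gaussianPDFReal 0 v) (v := g) (u' := fun t => -(t / v) * gaussianPDFReal 0 v t) (v' := g')
    (fun t _ => hasDerivAt_gaussianPDFReal hv t) (fun t _ => hg t) h2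
    (by
      refine (h1.const_mul (-(v : ℝ)⁻¹)).congr (Filter.Eventually.of_forall fun t => ?_)
      simp only [Pi.mul_apply]
      ring) h3
  rw [integral_gaussianReal_eq_integral_smul hv, integral_gaussianReal_eq_integral_smul hv]
  simp only [smul_eq_mul]
  rw [key, ← integral_neg, ← integral_const_mul]
  congr 1
  ext t
  field_simp

/-- Stein's identity in the `i`-th coordinate of a centred isotropic Gaussian vector; `G` is the
`i`-th partial derivative of `F`. -/
lemma stein_pi {N : ℕ} {v : ℝ≥0} (hv : v ≠ 0) (i : Fin N) {F G : (Fin N → ℝ) → ℝ}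
    (hFG : ∀ n t, HasDerivAt (fun s => F (Function.update n i s)) (G (Function.update n i t)) t)
    (h1 : Integrable (fun n => n i * F n) (Measure.pi fun _ : Fin N => gaussianReal 0 v))
    (h2 : Integrable G (Measure.pi fun _ : Fin N => gaussianReal 0 v))
    (h3 : Integrable F (Measure.pi fun _ : Fin N => gaussianReal 0 v)) :
    ∫ n, n i * F n ∂(Measure.pi fun _ : Fin N => gaussianReal 0 v)
      = v * ∫ n, G n ∂(Measure.pi fun _ : Fin N => gaussianReal 0 v) := by
  obtain _ | M := N
  · exact i.elim0
  let e := MeasurableEquiv.piFinSuccAbove (fun _ : Fin (M + 1) => ℝ) i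
  have he : MeasurePreserving e.symm _ _ :=
    (measurePreserving_piFinSuccAbove (fun _ : Fin (M + 1) => gaussianReal 0 v) i).symm e
  have hes : ∀ (t : ℝ) (w : Fin M → ℝ),
      e.symm (t, w) = Function.update (i.insertNth (0 : ℝ) w : Fin (M + 1) → ℝ) i t := by
    intro t w
    rw [Fin.update_insertNth]
    rfl
  have hei : ∀ (t : ℝ) (w : Fin M → ℝ), e.symm (t, w) i = t := by
    intro t w
    rw [hes, Function.update_self]
  have k1 := he.integrable_comp_of_integrable h1
  have k2 := he.integrable_comp_of_integrable h2
  have k3 := he.integrable_comp_of_integrable h3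
  rw [← he.integral_comp e.symm.measurableEmbedding (fun n => n i * F n),
    ← he.integral_comp e.symm.measurableEmbedding G, integral_prod_symm (fun y => e.symm y i * F (e.symm y)) k1,
    integral_prod_symm (fun y => G (e.symm y)) k2, ← integral_const_mul]
  refine integral_congr_ae ?_
  filter_upwards [k1.prod_left_ae, k2.prod_left_ae, k3.prod_left_ae] with w a1 a2 a3
  simp only [Function.comp_def, hei] at a1 a2 a3 ⊢
  refine stein_real hv (fun t => ?_) a1 a2 a3
  simp only [hes]
  exact hFG _ t

/-- Stein's identity in the `i`-th coordinate of the first of two independent vectors, the second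
one being frozen. -/
lemma stein_prod {N : ℕ} {v : ℝ≥0} (hv : v ≠ 0) (i : Fin N)
    (ν : Measure (Fin N → ℝ)) [SFinite ν] {F G : (Fin N → ℝ) × (Fin N → ℝ) → ℝ}
    (hFG : ∀ n z t, HasDerivAt (fun s => F (Function.update n i s, z))
      (G (Function.update n i t, z)) t)
    (h1 : Integrable (fun p => p.1 i * F p)
      ((Measure.pi fun _ : Fin N => gaussianReal 0 v).prod ν))
    (h2 : Integrable G ((Measure.pi fun _ : Fin N => gaussianReal 0 v).prod ν))
    (h3 : Integrable F ((Measure.pi fun _ : Fin N => gaussianReal 0 v).prod ν)) :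
    ∫ p, p.1 i * F p ∂((Measure.pi fun _ : Fin N => gaussianReal 0 v).prod ν)
      = v * ∫ p, G p ∂((Measure.pi fun _ : Fin N => gaussianReal 0 v).prod ν) := by
  rw [integral_prod_symm _ h1, integral_prod_symm _ h2, ← integral_const_mul]
  refine integral_congr_ae ?_
  filter_upwards [h1.prod_left_ae, h2.prod_left_ae, h3.prod_left_ae] with z a1 a2 a3
  exact stein_pi hv i (fun n t => hFG n z t) a1 a2 a3

/-- A map with bounded derivative has at most linear growth, so it preserves square
integrability. -/
lemma memLp_two_of_fderiv_le {Ω : Type*} [MeasurableSpace Ω] {μ : Measure Ω} [IsFiniteMeasure μ]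
    {N : ℕ} {h : (Fin N → ℝ) → (Fin N → ℝ)} (hdiff : ContDiff ℝ 1 h) {C : ℝ}
    (hC : ∀ v, ‖fderiv ℝ h v‖ ≤ C) {Y : Ω → Fin N → ℝ} (hY : MemLp Y 2 μ) :
    MemLp (fun ω => h (Y ω)) 2 μ := by
  have hd : MemLp (fun ω => h (Y ω) - h 0) 2 μ := by
    refine hY.of_le_mul (c := C) ?_ (Filter.Eventually.of_forall fun ω => ?_)
    · exact (hdiff.continuous.comp_aestronglyMeasurable hY.1).sub aestronglyMeasurable_const
    · simpa using Convex.norm_image_sub_le_of_norm_fderiv_le (𝕜 := ℝ) (f := h) (s := Set.univ)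
        (fun v _ => (hdiff.differentiable one_ne_zero) v) (fun v _ => hC v) convex_univ
        (Set.mem_univ 0) (Set.mem_univ (Y ω))
  exact (hd.add (memLp_const (h 0))).ae_eq (Filter.Eventually.of_forall fun ω => by simp)

lemma memLp_eval_pi_gaussianReal {N : ℕ} (v : ℝ≥0) (i : Fin N) :
    MemLp (fun n : Fin N → ℝ => n i) 2 (Measure.pi fun _ : Fin N => gaussianReal 0 v) :=
  (memLp_id_gaussianReal' 2 (by simp)).comp_measurePreserving
    (measurePreserving_eval (fun _ : Fin N => gaussianReal 0 v) i)

/-- Extended SURE (eSURE) is unbiased: with `y₁ = x + n₁`, `n₁ ~ N(0, σ₁²I)`,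
`z ~ N(0, σ_z²I)` independent of `n₁`, and `y₂ = y₁ + z`, for `h` C¹ with bounded
derivative,
`E[(1/N)‖x - h(y₂)‖²] = E[(1/N)‖y₁ - h(y₂)‖² - σ₁² + (2σ₁²/N)·∑ᵢ ∂hᵢ(y₂)/∂(y₂)ᵢ]`. -/
theorem esure_unbiased (N : ℕ) (hN : 0 < N) (x : Fin N → ℝ)
    (σ₁ σz : ℝ≥0) (hσ₁ : 0 < σ₁)
    (h : (Fin N → ℝ) → (Fin N → ℝ)) (hdiff : ContDiff ℝ 1 h)
    (C : ℝ) (hC : ∀ v : Fin N → ℝ, ‖fderiv ℝ h v‖ ≤ C) :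
    ∫ p : (Fin N → ℝ) × (Fin N → ℝ),
        (1 / (N : ℝ)) * ∑ i, (x i - h (x + p.1 + p.2) i) ^ 2
      ∂((Measure.pi fun _ : Fin N => gaussianReal 0 (σ₁ ^ 2)).prod
          (Measure.pi fun _ : Fin N => gaussianReal 0 (σz ^ 2)))
      = ∫ p : (Fin N → ℝ) × (Fin N → ℝ),
          ((1 / (N : ℝ)) * ∑ i, ((x + p.1) i - h (x + p.1 + p.2) i) ^ 2
            - (σ₁ : ℝ) ^ 2
            + (2 * (σ₁ : ℝ) ^ 2 / (N : ℝ))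
              * ∑ i, fderiv ℝ h (x + p.1 + p.2) (Pi.single i 1) i)
        ∂((Measure.pi fun _ : Fin N => gaussianReal 0 (σ₁ ^ 2)).prod
            (Measure.pi fun _ : Fin N => gaussianReal 0 (σz ^ 2))) := by
  have hv : σ₁ ^ 2 ≠ 0 := (pow_pos hσ₁ 2).ne'
  have hN' : (N : ℝ) ≠ 0 := by exact_mod_cast hN.ne'
  set μ := Measure.pi fun _ : Fin N => gaussianReal 0 (σ₁ ^ 2) with hμ
  set ν := Measure.pi fun _ : Fin N => gaussianReal 0 (σz ^ 2) with hν
  have hn : ∀ i, MemLp (fun p : (Fin N → ℝ) × (Fin N → ℝ) => p.1 i) 2 (μ.prod ν) := fun i =>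
    (memLp_eval_pi_gaussianReal (σ₁ ^ 2) i).comp_measurePreserving measurePreserving_fst
  have hz : ∀ i, MemLp (fun p : (Fin N → ℝ) × (Fin N → ℝ) => p.2 i) 2 (μ.prod ν) := fun i =>
    (memLp_eval_pi_gaussianReal (σz ^ 2) i).comp_measurePreserving measurePreserving_snd
  have hY : MemLp (fun p : (Fin N → ℝ) × (Fin N → ℝ) => x + p.1 + p.2) 2 (μ.prod ν) :=
    MemLp.of_eval fun i => ((memLp_const (x i)).add (hn i)).add (hz i)
  have hF : ∀ i, MemLp (fun p : (Fin N → ℝ) × (Fin N → ℝ) => h (x + p.1 + p.2) i) 2 (μ.prod ν) :=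
    fun i => (memLp_two_of_fderiv_le hdiff hC hY).eval i
  have hD : ∀ i, Integrable (fun p : (Fin N → ℝ) × (Fin N → ℝ) =>
      fderiv ℝ h (x + p.1 + p.2) (Pi.single i 1) i) (μ.prod ν) := by
    intro i
    refine Integrable.of_bound (C := C * ‖(Pi.single i 1 : Fin N → ℝ)‖) ?_
      (Filter.Eventually.of_forall fun p => ?_)
    · have hc : Continuous (fderiv ℝ h) := hdiff.continuous_fderiv one_ne_zero
      exact Continuous.aestronglyMeasurable (by fun_prop)
    · exact (norm_le_pi_norm _ i).trans ((fderiv ℝ h (x + p.1 + p.2)).le_of_opNorm_le (hC _) _)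
  have hFint := fun i => (hF i).integrable one_le_two
  have hnint := fun i => (hn i).integrable one_le_two
  have hnF : ∀ i, Integrable (fun p : (Fin N → ℝ) × (Fin N → ℝ) =>
      p.1 i * h (x + p.1 + p.2) i) (μ.prod ν) := fun i => (hn i).integrable_mul (hF i)
  have hstein : ∀ i, ∫ p : (Fin N → ℝ) × (Fin N → ℝ), p.1 i * h (x + p.1 + p.2) i ∂(μ.prod ν)
      = (σ₁ : ℝ) ^ 2 * ∫ p : (Fin N → ℝ) × (Fin N → ℝ),
          fderiv ℝ h (x + p.1 + p.2) (Pi.single i 1) i ∂(μ.prod ν) := by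
    intro i
    have := stein_prod hv i ν
      (F := fun p => h (x + p.1 + p.2) i)
      (G := fun p => fderiv ℝ h (x + p.1 + p.2) (Pi.single i 1) i) ?_ (hnF i) (hD i) (hFint i)
    · simpa using this
    · intro n z t
      have hu : HasDerivAt (fun s => x + Function.update n i s + z) (Pi.single i 1) t :=
        ((hasDerivAt_update n i t).const_add x).add_const z
      have hh := ((hdiff.differentiable one_ne_zero) (x + Function.update n i t + z)).hasFDerivAt
      exact (hasDerivAt_pi.1 (hh.comp_hasDerivAt t hu)) i
  -- The first two moments of `n₁ᵢ` are Stein's identity for `F = 1` and `F = n₁ᵢ`.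
  have hmean : ∀ i, ∫ p : (Fin N → ℝ) × (Fin N → ℝ), p.1 i ∂(μ.prod ν) = 0 := by
    intro i
    have := stein_prod hv i ν (F := fun _ => 1) (G := fun _ => 0)
      (fun n z t => hasDerivAt_const t 1) (by simpa using hnint i) (integrable_const _)
      (integrable_const _)
    simpa using this
  have hvar : ∀ i, ∫ p : (Fin N → ℝ) × (Fin N → ℝ), p.1 i ^ 2 ∂(μ.prod ν) = (σ₁ : ℝ) ^ 2 := by
    intro i
    have := stein_prod hv i ν (F := fun p => p.1 i) (G := fun _ => 1)
      (fun n z t => by simpa using hasDerivAt_id' t)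
      ((hn i).integrable_mul (hn i)) (integrable_const _) (hnint i)
    simp_rw [fun p : (Fin N → ℝ) × (Fin N → ℝ) => pow_two (p.1 i)]
    simpa using this
  have hA : ∀ i, Integrable (fun p : (Fin N → ℝ) × (Fin N → ℝ) =>
      (x i - h (x + p.1 + p.2) i) ^ 2) (μ.prod ν) := fun i =>
    ((memLp_const (x i)).sub (hF i)).integrable_sq
  have hB : ∀ i, Integrable (fun p : (Fin N → ℝ) × (Fin N → ℝ) =>
      ((x + p.1) i - h (x + p.1 + p.2) i) ^ 2) (μ.prod ν) := fun i =>
    (((memLp_const (x i)).add (hn i)).sub (hF i)).integrable_sq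
  have hsq : ∀ i, ∫ p : (Fin N → ℝ) × (Fin N → ℝ),
        ((x + p.1) i - h (x + p.1 + p.2) i) ^ 2 ∂(μ.prod ν)
      = ∫ p : (Fin N → ℝ) × (Fin N → ℝ), (x i - h (x + p.1 + p.2) i) ^ 2 ∂(μ.prod ν)
        + (σ₁ : ℝ) ^ 2 - 2 * (σ₁ : ℝ) ^ 2 * ∫ p : (Fin N → ℝ) × (Fin N → ℝ),
          fderiv ℝ h (x + p.1 + p.2) (Pi.single i 1) i ∂(μ.prod ν) := by
    intro i
    have hexp : ∀ p : (Fin N → ℝ) × (Fin N → ℝ), ((x + p.1) i - h (x + p.1 + p.2) i) ^ 2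
        = (x i - h (x + p.1 + p.2) i) ^ 2 + p.1 i ^ 2 + 2 * x i * p.1 i
          - 2 * (p.1 i * h (x + p.1 + p.2) i) := by
      intro p
      rw [Pi.add_apply]
      ring
    have i2 := (hn i).integrable_sq
    have i3 := (hnint i).const_mul (2 * x i)
    have i12 : Integrable (fun p : (Fin N → ℝ) × (Fin N → ℝ) =>
        (x i - h (x + p.1 + p.2) i) ^ 2 + p.1 i ^ 2) (μ.prod ν) := (hA i).add i2
    have i123 : Integrable (fun p : (Fin N → ℝ) × (Fin N → ℝ) =>
        (x i - h (x + p.1 + p.2) i) ^ 2 + p.1 i ^ 2 + 2 * x i * p.1 i) (μ.prod ν) := i12.add i3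
    simp_rw [hexp]
    rw [integral_sub i123 ((hnF i).const_mul 2),
      integral_add i12 i3, integral_add (hA i) i2, integral_const_mul,
      integral_const_mul, hmean, hvar, hstein]
    ring
  have hSB := (integrable_finsetSum Finset.univ fun i _ => hB i).const_mul (1 / (N : ℝ))
  have hSD := (integrable_finsetSum Finset.univ fun i _ => hD i).const_mul
    (2 * (σ₁ : ℝ) ^ 2 / (N : ℝ))
  have hSBc : Integrable (fun p : (Fin N → ℝ) × (Fin N → ℝ) =>
      (1 / (N : ℝ)) * ∑ i, ((x + p.1) i - h (x + p.1 + p.2) i) ^ 2 - (σ₁ : ℝ) ^ 2) (μ.prod ν) :=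
    hSB.sub (integrable_const _)
  rw [integral_add hSBc hSD, integral_sub hSB (integrable_const _),
    integral_const_mul, integral_const_mul, integral_const_mul,
    integral_finsetSum _ fun i _ => hA i, integral_finsetSum _ fun i _ => hB i,
    integral_finsetSum _ fun i _ => hD i, Finset.sum_congr rfl fun i _ => hsq i,
    Finset.sum_sub_distrib, Finset.sum_add_distrib, ← Finset.mul_sum]
  simp only [Finset.sum_const, Finset.card_univ, Fintype.card_fin, integral_const, probReal_univ,
    nsmul_eq_mul, smul_eq_mul, one_mul]
  field_simp
  ring
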